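/- Let φ₁, φ₂, ψ₁, ψ₂ : ℝ² → 𝒜 and p, q : ℝ² → ℝ be smooth with ∂_a φ_α = −p·ψ_α and ∂_â ψ_α = −q·φ_α for α = 1, 2. Let F = (F₀, F₁, F₂, F₃) : ℝ² → ℝ⁴ be C¹ such that at every point, for every X = (X₁, X₂) ∈ ℝ², setting z := X₁ + σX₂ ∈ 𝒜: d(F₀+F₁)(X) = −(ψ₁φ̂₁·z + ψ̂₁φ₁·ẑ), d(F₀−F₁)(X) = ψ₂φ̂₂·z + ψ̂₂φ₂·ẑ, dF₂(X) + σ·dF₃(X) = ψ₁φ̂₂·z + ψ̂₂φ₁·ẑ, and dF₂(X) − σ·dF₃(X) = ψ₂φ̂₁·z + ψ̂₁φ₂·ẑ. Then ⟨∂_u F, ∂_v F⟩ = 0 and −⟨∂_u F, ∂_u F⟩ = ⟨∂_v F, ∂_v F⟩ = |ψ₂φ₁ − ψ₁φ₂|². In particular, wherever |ψ₂φ₁ − ψ₁φ₂|² ≠ 0, F is a conformal immersion of a Lorentz surface into ℝ^{2,2} with induced metric g = −|ψ₂φ₁ − ψ₁φ₂|²·da·dâ = |ψ₂φ₁ − ψ₁φ₂|²(−du²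 + dv²). -/

import Mathlib

noncomputable section

/-! ### The algebra `𝒜` of Lorentz (split-complex) numbers.

We realize `𝒜` (the real algebra with basis `{1, σ}`, `σ² = 1`) in split coordinates:
`(x, y) : ℝ × ℝ` represents `u + σ v` with `x = u + v`, `y = u - v`.  Multiplication is then
componentwise, `1 = (1,1)`, and `σ = (1, -1)` satisfies `σ² = 1`. -/

abbrev LorentzA : Type := ℝ × ℝ

/-- The element `σ ∈ 𝒜`, with `σ² = 1`, `σ ∉ ℝ·1`. -/
def sA : LorentzA := (1, -1)

/-- The element `u + σ v` of `𝒜`. -/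
def mkA (u v : ℝ) : LorentzA := (u + v, u - v)

/-- The inclusion `ℝ ⊆ 𝒜`, `t ↦ t·1`. -/
def toA (t : ℝ) : LorentzA := (t, t)

/-- Conjugation of `𝒜`: `u + σ v ↦ u - σ v` (the swap, in split coordinates). -/
def conjA (a : LorentzA) : LorentzA := (a.2, a.1)

/-- `|a|² := a·â = u² - v²`, as a real number (so that `a * conjA a = toA (nsqA a)`). -/
def nsqA (a : LorentzA) : ℝ := a.1 * a.2

/-- The real part of `a = u + σ v ∈ 𝒜`, namely `u`. -/
def ReA (a : LorentzA) : ℝ := (a.1 + a.2) / 2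

/-- The imaginary part of `a = u + σ v ∈ 𝒜`, namely `v`. -/
def ImA (a : LorentzA) : ℝ := (a.1 - a.2) / 2

/-- The idempotent `(1 + σ)/2` of `𝒜`. -/
def eP : LorentzA := (1 + sA) / 2

/-- The idempotent `(1 - σ)/2` of `𝒜`. -/
def eM : LorentzA := (1 - sA) / 2

/-! ### Derivatives of maps `ℝ² → 𝒜` and `ℝ² → ℝ`. -/

/-- `∂_u f`. -/
def duA (f : ℝ × ℝ → LorentzA) (x : ℝ × ℝ) : LorentzA := fderiv ℝ f x (1, 0)

/-- `∂_v f`. -/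
def dvA (f : ℝ × ℝ → LorentzA) (x : ℝ × ℝ) : LorentzA := fderiv ℝ f x (0, 1)

/-- `∂_a f = ½ (∂_u f + σ ∂_v f)`. -/
def Da (f : ℝ × ℝ → LorentzA) (x : ℝ × ℝ) : LorentzA := ((2:ℝ)⁻¹) • (duA f x + sA * dvA f x)

/-- `∂_â f = ½ (∂_u f - σ ∂_v f)`.  A map is conformal iff `∂_â f = 0`. -/
def Dahat (f : ℝ × ℝ → LorentzA) (x : ℝ × ℝ) : LorentzA := ((2:ℝ)⁻¹) • (duA f x - sA * dvA f x)

/-- `∂_u f` for real-valued `f`. -/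
def duR (f : ℝ × ℝ → ℝ) (x : ℝ × ℝ) : ℝ := fderiv ℝ f x (1, 0)

/-- `∂_v f` for real-valued `f`. -/
def dvR (f : ℝ × ℝ → ℝ) (x : ℝ × ℝ) : ℝ := fderiv ℝ f x (0, 1)

/-- `∂²f/∂u²`. -/
def duuR (f : ℝ × ℝ → ℝ) (x : ℝ × ℝ) : ℝ := fderiv ℝ (fun y => fderiv ℝ f y (1, 0)) x (1, 0)

/-- `∂²f/∂v²`. -/
def dvvR (f : ℝ × ℝ → ℝ) (x : ℝ × ℝ) : ℝ := fderiv ℝ (fun y => fderiv ℝ f y (0, 1)) x (0, 1)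

/-- The wave operator `□ f = -∂²f/∂u² + ∂²f/∂v²`. -/
def boxR (f : ℝ × ℝ → ℝ) (x : ℝ × ℝ) : ℝ := -duuR f x + dvvR f x

/-! ### 2×2 matrices over `𝒜`. -/

abbrev M2A := Matrix (Fin 2) (Fin 2) LorentzA

/-- The conjugate transpose `B*` of `B ∈ M₂(𝒜)`. -/
def ctrans (B : M2A) : M2A := (B.map conjA).transpose

/-- `Herm₂(𝒜) = {B ∈ M₂(𝒜) : B = B*}`. -/
def Herm2 : Set M2A := {B | B = ctrans B}

/-- `SL₂(𝒜) = {B ∈ M₂(𝒜) : det B = 1}`. -/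
def SL2A : Set M2A := {B | B.det = 1}

/-- The inclusion `M₂(ℝ) ⊆ M₂(𝒜)`. -/
def mR (C : Matrix (Fin 2) (Fin 2) ℝ) : M2A := C.map toA

/-! ### The complexified Lorentz numbers `𝒜_ℂ = 𝒜 ⊗ ℂ ≅ ℂ × ℂ` (split coordinates),
and the quaternions `ℍ^{𝒜_ℂ}` with coefficients in `𝒜_ℂ`. -/

abbrev AC : Type := ℂ × ℂ

/-- `σ ∈ 𝒜_ℂ`. -/
def sC : AC := (1, -1)

/-- The complex unit `i ∈ 𝒜_ℂ`. -/
def iC : AC := (Complex.I, Complex.I)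

/-- Conjugation `u + σ v ↦ u - σ v` (`u, v ∈ ℂ`) of `𝒜_ℂ`. -/
def hatC (z : AC) : AC := (z.2, z.1)

/-- The inclusion `ℝ ⊆ 𝒜_ℂ`. -/
def rc (t : ℝ) : AC := ((t : ℂ), (t : ℂ))

/-- The inclusion `𝒜 ⊆ 𝒜_ℂ`. -/
def toAC (a : LorentzA) : AC := ((a.1 : ℂ), (a.2 : ℂ))

/-- `a ↦ i·a`, the image of `𝒜` in `i·𝒜 ⊆ 𝒜_ℂ`. -/
def iAC (a : LorentzA) : AC := (Complex.I * a.1, Complex.I * a.2)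

/-- `ℍ^{𝒜_ℂ}`: quaternions `ζ₀·1 + ζ₁·I + ζ₂·J + ζ₃·K` with `ζᵢ ∈ 𝒜_ℂ`,
`I² = J² = K² = -1`, `IJ = -JI = K`. -/
abbrev HAC := Quaternion AC

/-- The scalar quaternion `z·1`. -/
def qscalar (z : AC) : HAC := ⟨z, 0, 0, 0⟩

/-- The quaternion unit `I`. -/
def qI : HAC := ⟨0, 1, 0, 0⟩

/-- The quaternion unit `J`. -/
def qJ : HAC := ⟨0, 0, 1, 0⟩

/-- The quaternion unit `K`. -/
def qK : HAC := ⟨0, 0, 0, 1⟩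

/-- `ζ̂`: apply `𝒜_ℂ`-conjugation to each coefficient of a quaternion.
(Quaternionic conjugation `ζ̄` is `star ζ`.) -/
def qhat (q : HAC) : HAC := ⟨hatC q.re, hatC q.imI, hatC q.imJ, hatC q.imK⟩

/-- `H(ζ, ζ') = ½(ζ ζ̄' + ζ' ζ̄) = ζ₀ζ₀' + ζ₁ζ₁' + ζ₂ζ₂' + ζ₃ζ₃' ∈ 𝒜_ℂ`. -/
def Hform (q q' : HAC) : AC := q.re * q'.re + q.imI * q'.imI + q.imJ * q'.imJ + q.imK * q'.imK

/-- `p₀·1 + i p₁·I + p₂·J + i p₃·K` with `pᵢ ∈ 𝒜`: the generic element of `ℍ₀`. -/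
def mk0 (p₀ p₁ p₂ p₃ : LorentzA) : HAC :=
  qscalar (toAC p₀) + qscalar (iAC p₁) * qI + qscalar (toAC p₂) * qJ + qscalar (iAC p₃) * qK

/-- `i q₀·1 + q₁·I + i q₂·J + q₃·K` with `qᵢ ∈ 𝒜`: the generic element of `ℍ₁`. -/
def mk1 (q₀ q₁ q₂ q₃ : LorentzA) : HAC :=
  qscalar (iAC q₀) + qscalar (toAC q₁) * qI + qscalar (iAC q₂) * qJ + qscalar (toAC q₃) * qK

/-- `ℍ₀ = {p₀·1 + i p₁·I + p₂·J + i p₃·K : pᵢ ∈ 𝒜} ⊆ ℍ^{𝒜_ℂ}`. -/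
def H0set : Set HAC := {ζ | ∃ p₀ p₁ p₂ p₃ : LorentzA, ζ = mk0 p₀ p₁ p₂ p₃}

/-- `ℍ₁ = {i q₀·1 + q₁·I + i q₂·J + q₃·K : qᵢ ∈ 𝒜} ⊆ ℍ^{𝒜_ℂ}`. -/
def H1set : Set HAC := {ζ | ∃ q₀ q₁ q₂ q₃ : LorentzA, ζ = mk1 q₀ q₁ q₂ q₃}

/-- `Spin(2,2) = {p ∈ ℍ₀ : H(p,p) = 1}`. -/
def SpinSet : Set HAC := {p | p ∈ H0set ∧ Hform p p = 1}

/-- Extraction of the `𝒜`-coefficient of an element of `𝒜 ⊆ 𝒜_ℂ`. -/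
def reEx (z : AC) : LorentzA := (z.1.re, z.2.re)

/-- Extraction of the `𝒜`-coefficient of an element of `i·𝒜 ⊆ 𝒜_ℂ`. -/
def imEx (z : AC) : LorentzA := (z.1.im, z.2.im)

/-- The map `A₀ : ℍ₀ → M₂(𝒜)`,
`p₀·1 + i p₁·I + p₂·J + i p₃·K ↦ [[p₀ - σp₁, p₂ - σp₃], [-p₂ - σp₃, p₀ + σp₁]]`
(written via coefficient extraction, so that it is a total function on `ℍ^{𝒜_ℂ}`
agreeing with `A₀` on `ℍ₀`). -/
def A0 (ζ : HAC) : M2A :=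
  !![reEx ζ.re - sA * imEx ζ.imI, reEx ζ.imJ - sA * imEx ζ.imK;
     -reEx ζ.imJ - sA * imEx ζ.imK, reEx ζ.re + sA * imEx ζ.imI]

/-- The map `A₁ : ℍ₁ → M₂(𝒜)`,
`i q₀·1 + q₁·I + i q₂·J + q₃·K ↦ [[-q₁ - σq₀, -q₃ - σq₂], [-q₃ + σq₂, q₁ - σq₀]]`. -/
def A1 (ζ : HAC) : M2A :=
  !![-reEx ζ.imI - sA * imEx ζ.re, -reEx ζ.imK - sA * imEx ζ.imJ;
     -reEx ζ.imK + sA * imEx ζ.imJ, reEx ζ.imI - sA * imEx ζ.re]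

/-! Identify `ℝ^{2,2}` with the Hermitian matrices over `𝒜` so that the determinant becomes the
quadratic form `⟨x, x⟩`. The Weierstrass equations then say that `dF(X)` corresponds to
`z • ψφ* + ẑ • φψ*`, where `φ` and `ψ` are columns. This matrix factors as
`[ψ φ] * diag(z, ẑ) * [φ ψ]*`, and multiplicativity of the determinant gives
`⟨dF(X), dF(X)⟩ = -|ψ₂φ₁ - ψ₁φ₂|² |z|²`. Polarizing, `dF` pulls the scalar product back to
`|ψ₂φ₁ - ψ₁φ₂|² (-du² + dv²)`; where this is nondegenerate, `dF` is injective. -/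

open LinearMap (BilinForm)

section BilinForm

variable {R M N : Type*} [CommSemiring R] [AddCommGroup M] [Module R M]
  [AddCommMonoid N] [Module R N] {B : BilinForm R N}

theorem injective_of_separatingLeft_comp {f g : M →ₗ[R] N}
    (h : (B.comp f g).SeparatingLeft) : Function.Injective f :=
  (injective_iff_map_eq_zero f).mpr fun x hx => h x fun y => by
    rw [BilinForm.comp_apply, hx, map_zero, LinearMap.zero_apply]

theorem separatingLeft_smul [NoZeroDivisors R] (hB : B.SeparatingLeft) {c : R} (hc : c ≠ 0) :
    (c • B).SeparatingLeft := fun x hx =>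
  hB x fun y => (mul_eq_zero.mp (hx y)).resolve_left hc

end BilinForm

/-- The scalar product of `ℝ^{2,2}`, with the coordinates of `ℝ⁴` as a nested pair. -/
def neutralForm : BilinForm ℝ (ℝ × ℝ × ℝ × ℝ) :=
  LinearMap.mk₂ ℝ
    (fun x y => -(x.1 * y.1) + x.2.1 * y.2.1 - x.2.2.1 * y.2.2.1 + x.2.2.2 * y.2.2.2)
    (fun _ _ _ => by simp only [Prod.fst_add, Prod.snd_add]; ring)
    (fun _ _ _ => by simp only [Prod.smul_fst, Prod.smul_snd, smul_eq_mul]; ring)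
    (fun _ _ _ => by simp only [Prod.fst_add, Prod.snd_add]; ring)
    (fun _ _ _ => by simp only [Prod.smul_fst, Prod.smul_snd, smul_eq_mul]; ring)

theorem neutralForm_apply (x y : ℝ × ℝ × ℝ × ℝ) :
    neutralForm x y =
      -(x.1 * y.1) + x.2.1 * y.2.1 - x.2.2.1 * y.2.2.1 + x.2.2.2 * y.2.2.2 :=
  rfl

theorem neutralForm_isSymm : neutralForm.IsSymm :=
  ⟨fun x y => by simp only [neutralForm_apply]; ring⟩

/-- The Lorentz metric `-du² + dv²` of the parameter plane. -/
def lorentzForm : BilinForm ℝ (ℝ × ℝ) :=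
  LinearMap.mk₂ ℝ (fun X Y => -(X.1 * Y.1) + X.2 * Y.2)
    (fun _ _ _ => by simp only [Prod.fst_add, Prod.snd_add]; ring)
    (fun _ _ _ => by simp only [Prod.smul_fst, Prod.smul_snd, smul_eq_mul]; ring)
    (fun _ _ _ => by simp only [Prod.fst_add, Prod.snd_add]; ring)
    (fun _ _ _ => by simp only [Prod.smul_fst, Prod.smul_snd, smul_eq_mul]; ring)

theorem lorentzForm_apply (X Y : ℝ × ℝ) : lorentzForm X Y = -(X.1 * Y.1) + X.2 * Y.2 :=
  rfl

theorem lorentzForm_isSymm : lorentzForm.IsSymm :=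
  ⟨fun X Y => by simp only [lorentzForm_apply]; ring⟩

theorem lorentzForm_separatingLeft : lorentzForm.SeparatingLeft := fun X hX => by
  have hu := hX (1, 0)
  have hv := hX (0, 1)
  simp only [lorentzForm_apply, mul_one, mul_zero, add_zero, neg_zero, zero_add,
    neg_eq_zero] at hu hv
  exact Prod.ext hu hv

theorem lorentzForm_self (X : ℝ × ℝ) : lorentzForm X X = -nsqA (mkA X.1 X.2) := by
  simp only [lorentzForm_apply, nsqA, mkA]; ring

theorem toA_injective : Function.Injective toA := fun _ _ h => congrArg Prod.fst h

theorem toA_nsqA (a : LorentzA) : toA (nsqA a) = a * conjA a :=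
  Prod.ext rfl (mul_comm _ _)

theorem conjA_mul (a b : LorentzA) : conjA (a * b) = conjA a * conjA b :=
  rfl

theorem nsqA_mul (a b : LorentzA) : nsqA (a * b) = nsqA a * nsqA b :=
  mul_mul_mul_comm _ _ _ _

theorem det_ctrans (B : M2A) : (ctrans B).det = conjA B.det := by
  rw [ctrans, Matrix.det_transpose]
  exact ((RingEquiv.prodComm : LorentzA ≃+* LorentzA).map_det B).symm

/-- The Hermitian matrix over `𝒜` representing a vector of `ℝ^{2,2}`. The sign of the upper left
entry is chosen so that the determinant is `⟨x, x⟩`. -/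
def hermMatrix (x : ℝ × ℝ × ℝ × ℝ) : M2A :=
  !![-toA (x.1 + x.2.1), toA x.2.2.1 + sA * toA x.2.2.2;
     toA x.2.2.1 - sA * toA x.2.2.2, toA (x.1 - x.2.1)]

theorem det_hermMatrix (x : ℝ × ℝ × ℝ × ℝ) : (hermMatrix x).det = toA (neutralForm x x) := by
  rw [hermMatrix, Matrix.det_fin_two_of]
  ext <;>
    simp only [toA, sA, neutralForm_apply, Prod.fst_add, Prod.snd_add, Prod.fst_sub, Prod.snd_sub,
      Prod.fst_neg, Prod.snd_neg, Prod.fst_mul, Prod.snd_mul] <;> ring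

/-- The matrix `z • ψφ* + ẑ • φψ*` of Weierstrass integrands determined by the spinor columns
`φ = (φ₁, φ₂)` and `ψ = (ψ₁, ψ₂)`, evaluated at `z ∈ 𝒜`. -/
def weierstrassMatrix (φ ψ : Fin 2 → LorentzA) (z : LorentzA) : M2A :=
  Matrix.of fun i j => ψ i * conjA (φ j) * z + conjA (ψ j) * φ i * conjA z

/-- The matrix with columns `a` and `b`, used for the spinor frames `[ψ φ]` and `[φ ψ]`. -/
def ofColumns (a b : Fin 2 → LorentzA) : M2A :=
  Matrix.of fun i => ![a i, b i]

theorem det_ofColumns (a b : Fin 2 → LorentzA) : (ofColumns a b).det = a 0 * b 1 - b 0 * a 1 :=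
  Matrix.det_fin_two _

theorem weierstrassMatrix_eq_mul (φ ψ : Fin 2 → LorentzA) (z : LorentzA) :
    weierstrassMatrix φ ψ z =
      ofColumns ψ φ * Matrix.diagonal ![z, conjA z] * ctrans (ofColumns φ ψ) := by
  ext1 i j
  calc weierstrassMatrix φ ψ z i j
      = ψ i * z * conjA (φ j) + φ i * conjA z * conjA (ψ j) := by
        rw [weierstrassMatrix, Matrix.of_apply]; ring
    _ = (ofColumns ψ φ * Matrix.diagonal ![z, conjA z] * ctrans (ofColumns φ ψ)) i j := by
        rw [Matrix.mul_apply, Fin.sum_univ_two, Matrix.mul_diagonal, Matrix.mul_diagonal]; rfl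

theorem det_weierstrassMatrix (φ ψ : Fin 2 → LorentzA) (z : LorentzA) :
    (weierstrassMatrix φ ψ z).det = -toA (nsqA ((ψ 1 * φ 0 - ψ 0 * φ 1) * z)) := by
  set W := ψ 1 * φ 0 - ψ 0 * φ 1 with hW
  have hψφ : (ofColumns ψ φ).det = -W := by rw [det_ofColumns, hW]; ring
  have hφψ : (ofColumns φ ψ).det = W := by rw [det_ofColumns, hW]; ring
  have hz : (Matrix.diagonal ![z, conjA z]).det = z * conjA z := by
    rw [Matrix.det_diagonal, Fin.prod_univ_two]; rfl
  rw [weierstrassMatrix_eq_mul, Matrix.det_mul, Matrix.det_mul, det_ctrans, hψφ, hφψ, hz,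
    toA_nsqA, conjA_mul]
  ring

theorem neutralForm_comp_of_hermMatrix_eq {φ ψ : Fin 2 → LorentzA}
    {L : ℝ × ℝ →ₗ[ℝ] ℝ × ℝ × ℝ × ℝ}
    (hL : ∀ X, hermMatrix (L X) = weierstrassMatrix φ ψ (mkA X.1 X.2)) :
    neutralForm.comp L L = nsqA (ψ 1 * φ 0 - ψ 0 * φ 1) • lorentzForm := by
  refine BilinForm.ext_of_isSymm ⟨fun X Y => neutralForm_isSymm.eq (L X) (L Y)⟩
    (lorentzForm_isSymm.smul _) fun X => toA_injective ?_
  calc toA (neutralForm (L X) (L X))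
      = (weierstrassMatrix φ ψ (mkA X.1 X.2)).det := by rw [← det_hermMatrix, hL]
    _ = toA (nsqA (ψ 1 * φ 0 - ψ 0 * φ 1) * lorentzForm X X) := by
      rw [det_weierstrassMatrix, nsqA_mul, lorentzForm_self, mul_neg]; rfl

theorem stmt12_general {φ₁ φ₂ ψ₁ ψ₂ : LorentzA} {F₀ F₁ F₂ F₃ : ℝ × ℝ → ℝ}
    {F₀' F₁' F₂' F₃' : ℝ × ℝ →L[ℝ] ℝ} {x : ℝ × ℝ}
    (hF₀ : HasFDerivAt F₀ F₀' x) (hF₁ : HasFDerivAt F₁ F₁' x)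
    (hF₂ : HasFDerivAt F₂ F₂' x) (hF₃ : HasFDerivAt F₃ F₃' x)
    (hadd : ∀ X : ℝ × ℝ, toA ((F₀' + F₁') X) =
      -(ψ₁ * conjA φ₁ * mkA X.1 X.2 + conjA ψ₁ * φ₁ * conjA (mkA X.1 X.2)))
    (hsub : ∀ X : ℝ × ℝ, toA ((F₀' - F₁') X) =
      ψ₂ * conjA φ₂ * mkA X.1 X.2 + conjA ψ₂ * φ₂ * conjA (mkA X.1 X.2))
    (hadd_σ : ∀ X : ℝ × ℝ, toA (F₂' X) + sA * toA (F₃' X) =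
      ψ₁ * conjA φ₂ * mkA X.1 X.2 + conjA ψ₂ * φ₁ * conjA (mkA X.1 X.2))
    (hsub_σ : ∀ X : ℝ × ℝ, toA (F₂' X) - sA * toA (F₃' X) =
      ψ₂ * conjA φ₁ * mkA X.1 X.2 + conjA ψ₁ * φ₂ * conjA (mkA X.1 X.2)) :
    (-(duR F₀ x * dvR F₀ x) + duR F₁ x * dvR F₁ x - duR F₂ x * dvR F₂ x +
      duR F₃ x * dvR F₃ x = 0) ∧
    (-(-(duR F₀ x) ^ 2 + (duR F₁ x) ^ 2 - (duR F₂ x) ^ 2 + (duR F₃ x) ^ 2) =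
      nsqA (ψ₂ * φ₁ - ψ₁ * φ₂)) ∧
    (-(dvR F₀ x) ^ 2 + (dvR F₁ x) ^ 2 - (dvR F₂ x) ^ 2 + (dvR F₃ x) ^ 2 =
      nsqA (ψ₂ * φ₁ - ψ₁ * φ₂)) ∧
    (nsqA (ψ₂ * φ₁ - ψ₁ * φ₂) ≠ 0 →
      Function.Injective fun X : ℝ × ℝ =>
        (fderiv ℝ F₀ x X, fderiv ℝ F₁ x X, fderiv ℝ F₂ x X, fderiv ℝ F₃ x X)) := by
  let dF := (F₀'.prod (F₁'.prod (F₂'.prod F₃'))).toLinearMap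
  have hdF : ∀ X, hermMatrix (dF X) = weierstrassMatrix ![φ₁, φ₂] ![ψ₁, ψ₂] (mkA X.1 X.2) :=
    fun X => by
      ext1 i j
      fin_cases i <;> fin_cases j
      · exact neg_eq_iff_eq_neg.mpr (hadd X)
      · exact hadd_σ X
      · exact hsub_σ X
      · exact hsub X
  have hmetric := neutralForm_comp_of_hermMatrix_eq hdF
  have hpull (X Y : ℝ × ℝ) :
      -(F₀' X * F₀' Y) + F₁' X * F₁' Y - F₂' X * F₂' Y + F₃' X * F₃' Y =
        nsqA (ψ₂ * φ₁ - ψ₁ * φ₂) * (-(X.1 * Y.1) + X.2 * Y.2) :=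
    LinearMap.congr_fun₂ hmetric X Y
  simp only [duR, dvR, hF₀.fderiv, hF₁.fderiv, hF₂.fderiv, hF₃.fderiv]
  refine ⟨?_, ?_, ?_, fun hN => ?_⟩
  · simpa using hpull (1, 0) (0, 1)
  · linear_combination -hpull (1, 0) (1, 0)
  · linear_combination hpull (0, 1) (0, 1)
  · have hsep : (neutralForm.comp dF dF).SeparatingLeft :=
      hmetric ▸ separatingLeft_smul lorentzForm_separatingLeft hN
    exact injective_of_separatingLeft_comp hsep

/-- Generalized Weierstrass representation in `ℝ^{2,2}`: given smooth
solutions of the Dirac system `∂_a φ_α = -p·ψ_α`, `∂_â ψ_α = -q·φ_α` (`α = 1,2`) and a `C¹`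
map `F = (F₀,F₁,F₂,F₃) : ℝ² → ℝ⁴` whose differential is prescribed by the Weierstrass
integrands, `F` satisfies the conformality relations `⟨∂_u F, ∂_v F⟩ = 0` and
`-⟨∂_u F, ∂_u F⟩ = ⟨∂_v F, ∂_v F⟩ = |ψ₂φ₁ - ψ₁φ₂|²` (for the signature-(2,2) product),
and wherever `|ψ₂φ₁ - ψ₁φ₂|² ≠ 0` its differential is injective, i.e. `F` is a conformal
immersion with induced metric `|ψ₂φ₁ - ψ₁φ₂|²(-du² + dv²)`. -/
theorem stmt12 (φ₁ φ₂ ψ₁ ψ₂ : ℝ × ℝ → LorentzA) (p q : ℝ × ℝ → ℝ)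
    (F₀ F₁ F₂ F₃ : ℝ × ℝ → ℝ)
    (hφ₁ : ContDiff ℝ (⊤ : ℕ∞) φ₁) (hφ₂ : ContDiff ℝ (⊤ : ℕ∞) φ₂)
    (hψ₁ : ContDiff ℝ (⊤ : ℕ∞) ψ₁) (hψ₂ : ContDiff ℝ (⊤ : ℕ∞) ψ₂)
    (hp : ContDiff ℝ (⊤ : ℕ∞) p) (hq : ContDiff ℝ (⊤ : ℕ∞) q)
    (hF₀ : ContDiff ℝ 1 F₀) (hF₁ : ContDiff ℝ 1 F₁)
    (hF₂ : ContDiff ℝ 1 F₂) (hF₃ : ContDiff ℝ 1 F₃)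
    (hD1 : ∀ x, Da φ₁ x = -toA (p x) * ψ₁ x) (hD2 : ∀ x, Da φ₂ x = -toA (p x) * ψ₂ x)
    (hD3 : ∀ x, Dahat ψ₁ x = -toA (q x) * φ₁ x) (hD4 : ∀ x, Dahat ψ₂ x = -toA (q x) * φ₂ x)
    (hW1 : ∀ x X : ℝ × ℝ, toA (fderiv ℝ (fun y => F₀ y + F₁ y) x X) =
      -(ψ₁ x * conjA (φ₁ x) * mkA X.1 X.2 + conjA (ψ₁ x) * φ₁ x * conjA (mkA X.1 X.2)))
    (hW2 : ∀ x X : ℝ × ℝ, toA (fderiv ℝ (fun y => F₀ y - F₁ y) x X) =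
      ψ₂ x * conjA (φ₂ x) * mkA X.1 X.2 + conjA (ψ₂ x) * φ₂ x * conjA (mkA X.1 X.2))
    (hW3 : ∀ x X : ℝ × ℝ, toA (fderiv ℝ F₂ x X) + sA * toA (fderiv ℝ F₃ x X) =
      ψ₁ x * conjA (φ₂ x) * mkA X.1 X.2 + conjA (ψ₂ x) * φ₁ x * conjA (mkA X.1 X.2))
    (hW4 : ∀ x X : ℝ × ℝ, toA (fderiv ℝ F₂ x X) - sA * toA (fderiv ℝ F₃ x X) =
      ψ₂ x * conjA (φ₁ x) * mkA X.1 X.2 + conjA (ψ₁ x) * φ₂ x * conjA (mkA X.1 X.2)) :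
    ∀ x : ℝ × ℝ,
      (-(duR F₀ x * dvR F₀ x) + duR F₁ x * dvR F₁ x - duR F₂ x * dvR F₂ x +
        duR F₃ x * dvR F₃ x = 0) ∧
      (-(-(duR F₀ x) ^ 2 + (duR F₁ x) ^ 2 - (duR F₂ x) ^ 2 + (duR F₃ x) ^ 2) =
        nsqA (ψ₂ x * φ₁ x - ψ₁ x * φ₂ x)) ∧
      (-(dvR F₀ x) ^ 2 + (dvR F₁ x) ^ 2 - (dvR F₂ x) ^ 2 + (dvR F₃ x) ^ 2 =
        nsqA (ψ₂ x * φ₁ x - ψ₁ x * φ₂ x)) ∧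
      (nsqA (ψ₂ x * φ₁ x - ψ₁ x * φ₂ x) ≠ 0 →
        Function.Injective fun X : ℝ × ℝ =>
          (fderiv ℝ F₀ x X, fderiv ℝ F₁ x X, fderiv ℝ F₂ x X, fderiv ℝ F₃ x X)) := by
  intro x
  have hd {F : ℝ × ℝ → ℝ} (hF : ContDiff ℝ 1 F) := hF.differentiable one_ne_zero x
  exact stmt12_general (hd hF₀).hasFDerivAt (hd hF₁).hasFDerivAt (hd hF₂).hasFDerivAt
    (hd hF₃).hasFDerivAt (fderiv_fun_add (hd hF₀) (hd hF₁) ▸ hW1 x)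
    (fderiv_fun_sub (hd hF₀) (hd hF₁) ▸ hW2 x) (hW3 x) (hW4 x)
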